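/- arXiv:2204.08259 — 2 statements merged into one kernel-verified Lean document; each statement's English description precedes it below -/
import Mathlib

section
/- Let b > 0, let (n_k)_{k∈ℤ} be an increasing sequence of integers, let (κ_k)_{k∈ℤ} ∈ ℓ² be complex, and set z_k = n_k + κ_k. Assume equal values among the z_k are neighboring, i.e. whenever z_k has multiplicity m_k in the sequence, z_k = z_{k+1} = … = z_{k+m_k−1}; let S = {k ∈ ℤ : z_k ≠ z_{k−1}} and define e_{k+ν}(x) = x^ν · exp(i z_k x) for k ∈ S and ν = 0, …, m_k − 1. Then the system {e_k}_{k∈ℤ} is complete in L²(−b, b) if and only if the system {exp(i n_k x)}_{k∈ℤ} is complete in L²(−b, b). -/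
/-!
For `g ∈ L²(−b, b)` let `F(w) = ∫ conj (g x) e^{iwx} dx`, an entire function whose derivatives at `w`
are, up to powers of `i`, the pairings of `g` with `x^ν e^{iwx}`. A system of exponentials with
multiplicities is therefore incomplete exactly when some nonzero `g` has a transform vanishing, with
multiplicities, at all the exponents (`systemComplete_iff`). It remains to pass from a nonzero
transform vanishing at a sequence `l` to one vanishing at `m` when `l - m ∈ ℓ²`, and this is used in
both directions.

A single zero can be moved inside `L²(−b, b)`: if `F(l) = 0`, then `F(z) / (z - l)` is again a
transform, of an explicit primitive (`exists_moment_div`), hence so is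
`F(z) (z - m) / (z - l) = F(z) + (l - m) F(z) / (z - l)`. Moving the zeros in a finite set `A` gives
`G_A` with transform `F(z) ∏_{k ∈ A} (1 + (l k - m k) / (z - l k))`. On a line `Im z = Y` far
from all exponents, `∑ 1 / |z - l k|²` is bounded uniformly, so by Cauchy–Schwarz these products are
uniformly Cauchy, and they and their reciprocals are uniformly bounded. Parseval's identity for
`conj (g x) e^{-Yx}` on `(−b, b)` turns pointwise comparisons of transforms on the line into
comparisons of `L²` norms (`norm_le_of_moment_le`); consequently `G_A` converges in `L²(−b, b)` to a
nonzero function whose transform has the required zeros (`exists_vanishesAt_of_perturb`).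
-/

open MeasureTheory Set

/-- A system of functions is complete in `L²(−b, b)` if the closure of its linear
span is the whole space. -/
def SystemComplete (b : ℝ) (f : ℤ → ℝ → ℂ) : Prop :=
  (Submodule.span ℂ {F : Lp ℂ 2 (volume.restrict (Ioo (-b) b)) |
      ∃ k : ℤ, (F : ℝ → ℂ) =ᵐ[volume.restrict (Ioo (-b) b)] f k}).topologicalClosure = ⊤

open scoped ComplexConjugate

/-! ### Moments and the Fourier–Laplace transform -/

/-- The Hilbert space `L²(−b, b)`. -/
abbrev L2I (b : ℝ) : Type := Lp ℂ 2 (volume.restrict (Ioo (-b) b))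

/-- The function `x ↦ x^ν e^{i w x}`. -/
noncomputable def expMono (ν : ℕ) (w : ℂ) (x : ℝ) : ℂ :=
  (x : ℂ) ^ ν * Complex.exp (Complex.I * w * (x : ℂ))

/-- The pairing `∫ conj (g x) x^ν e^{i w x} dx` over `(−b, b)`. For `ν = 0` and variable `w` this is
the Fourier–Laplace transform of `conj g`, an entire function of `w`. -/
noncomputable def moment {b : ℝ} (g : L2I b) (ν : ℕ) (w : ℂ) : ℂ :=
  ∫ x in Ioo (-b) b, conj (g x) * expMono ν w x

lemma continuous_expMono (ν : ℕ) (w : ℂ) : Continuous (expMono ν w) := by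
  unfold expMono; fun_prop

lemma memLp_of_continuous (b : ℝ) (p : ENNReal) {f : ℝ → ℂ} (hf : Continuous f) :
    MemLp f p (volume.restrict (Ioo (-b) b)) := by
  obtain ⟨C, hC⟩ := (isCompact_Icc (a := -b) (b := b)).exists_bound_of_continuousOn hf.continuousOn
  refine MemLp.of_bound hf.aestronglyMeasurable C ?_
  filter_upwards [ae_restrict_mem measurableSet_Ioo] with x hx using hC x ⟨hx.1.le, hx.2.le⟩

lemma memLp_conj {b : ℝ} (g : L2I b) :
    MemLp (fun x => conj (g x)) 2 (volume.restrict (Ioo (-b) b)) := (Lp.memLp g).star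

lemma integrable_conj {b : ℝ} (g : L2I b) :
    Integrable (fun x => conj (g x)) (volume.restrict (Ioo (-b) b)) :=
  (memLp_conj g).integrable (by norm_num)

lemma integrable_conj_mul {b : ℝ} (g : L2I b) {f : ℝ → ℂ} (hf : Continuous f) :
    Integrable (fun x => conj (g x) * f x) (volume.restrict (Ioo (-b) b)) :=
  (memLp_conj g).integrable_mul (memLp_of_continuous b 2 hf)

lemma moment_eq_inner {b : ℝ} (g : L2I b) (ν : ℕ) (w : ℂ) :
    moment g ν w = inner ℂ g ((memLp_of_continuous b 2 (continuous_expMono ν w)).toLp _) := by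
  rw [L2.inner_def, moment]
  refine integral_congr_ae ?_
  filter_upwards [(memLp_of_continuous b 2 (continuous_expMono ν w)).coeFn_toLp] with x hx
  rw [hx, RCLike.inner_apply, mul_comm]

lemma moment_add {b : ℝ} (g h : L2I b) (ν : ℕ) (w : ℂ) :
    moment (g + h) ν w = moment g ν w + moment h ν w := by
  simp only [moment_eq_inner, inner_add_left]

lemma moment_sub {b : ℝ} (g h : L2I b) (ν : ℕ) (w : ℂ) :
    moment (g - h) ν w = moment g ν w - moment h ν w := by
  simp only [moment_eq_inner, inner_sub_left]

lemma moment_smul {b : ℝ} (c : ℂ) (g : L2I b) (ν : ℕ) (w : ℂ) :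
    moment (c • g) ν w = conj c * moment g ν w := by
  simp only [moment_eq_inner, inner_smul_left]

lemma continuous_moment {b : ℝ} (ν : ℕ) (w : ℂ) :
    Continuous (fun g : L2I b => moment g ν w) := by
  simp only [moment_eq_inner]
  fun_prop

lemma hasDerivAt_moment {b : ℝ} (g : L2I b) (ν : ℕ) (w : ℂ) :
    HasDerivAt (fun w => moment g ν w) (Complex.I * moment g (ν + 1) w) w := by
  have hexp : ∀ z ∈ Metric.ball w 1, ∀ x ∈ Ioo (-b) b,
      ‖Complex.exp (Complex.I * z * (x : ℂ))‖ ≤ Real.exp ((‖w‖ + 1) * b) := by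
    intro z hz x hx
    rw [Complex.norm_exp]
    refine Real.exp_le_exp.2 ?_
    refine (Complex.re_le_norm _).trans ?_
    have h1 : ‖z‖ ≤ ‖w‖ + 1 := by
      have := norm_sub_norm_le z w
      rw [Metric.mem_ball, dist_eq_norm] at hz
      linarith
    have h2 : |x| ≤ b := abs_le.2 ⟨hx.1.le, hx.2.le⟩
    rw [norm_mul, norm_mul, Complex.norm_I, one_mul, Complex.norm_real, Real.norm_eq_abs]
    gcongr
  have key := (hasDerivAt_integral_of_dominated_loc_of_deriv_le
    (μ := volume.restrict (Ioo (-b) b))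
    (F := fun z x => conj (g x) * expMono ν z x)
    (F' := fun z x => conj (g x) * (Complex.I * expMono (ν + 1) z x))
    (x₀ := w) (s := Metric.ball w 1)
    (bound := fun x => ‖conj (g x)‖ * (b ^ (ν + 1) * Real.exp ((‖w‖ + 1) * b)))
    (Metric.ball_mem_nhds w one_pos)
    (Filter.Eventually.of_forall fun z =>
      (integrable_conj_mul g (continuous_expMono ν z)).aestronglyMeasurable)
    (integrable_conj_mul g (continuous_expMono ν w))
    (integrable_conj_mul g
      (continuous_const.mul (continuous_expMono (ν + 1) w))).aestronglyMeasurable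
    ?_ ((integrable_conj g).norm.mul_const _) ?_).2
  · refine key.congr_deriv ?_
    rw [moment, ← integral_const_mul]
    refine integral_congr_ae (Filter.Eventually.of_forall fun x => ?_)
    ring
  · filter_upwards [ae_restrict_mem measurableSet_Ioo] with x hx z hz
    have h2 : |x| ≤ b := abs_le.2 ⟨hx.1.le, hx.2.le⟩
    have hb : 0 ≤ b := (abs_nonneg x).trans h2
    rw [norm_mul, norm_mul, Complex.norm_I, one_mul, expMono, norm_mul, norm_pow,
      Complex.norm_real, Real.norm_eq_abs]
    have := hexp z hz x hx
    gcongr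
  · refine Filter.Eventually.of_forall fun x z _ => ?_
    have h : HasDerivAt (fun z : ℂ => Complex.exp (Complex.I * z * (x : ℂ)))
        (Complex.exp (Complex.I * z * (x : ℂ)) * (Complex.I * x)) z := by
      have := ((hasDerivAt_id z).const_mul Complex.I).mul_const (x : ℂ)
      simpa using this.cexp
    have := (h.const_mul ((x : ℂ) ^ ν)).const_mul (conj (g x))
    refine this.congr_deriv ?_
    simp only [expMono]
    ring

lemma differentiable_moment {b : ℝ} (g : L2I b) (ν : ℕ) :
    Differentiable ℂ (fun w => moment g ν w) :=
  fun w => (hasDerivAt_moment g ν w).differentiableAt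

lemma iteratedDeriv_moment {b : ℝ} (g : L2I b) (ν : ℕ) (w : ℂ) :
    iteratedDeriv ν (moment g 0) w = Complex.I ^ ν * moment g ν w := by
  induction ν generalizing w with
  | zero => simp
  | succ ν ih =>
    rw [iteratedDeriv_succ, funext ih]
    rw [((hasDerivAt_moment g ν w).const_mul (Complex.I ^ ν)).deriv]
    ring

/-- Vanishing of the first `m` moments at `w` is vanishing of order `m` of the transform at `w`. -/
lemma le_order_iff_moment {b : ℝ} (g : L2I b) (m : ℕ) (w : ℂ) :
    (m : ℕ∞) ≤ analyticOrderAt (moment g 0) w ↔ ∀ j < m, moment g j w = 0 := by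
  rw [natCast_le_analyticOrderAt_iff_iteratedDeriv_eq_zero
    ((differentiable_moment g 0).analyticAt w)]
  simp [iteratedDeriv_moment]

/-! ### Division by a linear factor -/

/-- Division by a linear factor stays inside the class of transforms: if the transform of `g`
vanishes at `l`, then its quotient by `z - l` is the transform of the function whose conjugate is
`-i e^{-ilx} ∫_{-b}^x conj (g t) e^{ilt} dt`. -/
lemma exists_moment_div {b : ℝ} (g : L2I b) (l : ℂ) (hl : moment g 0 l = 0) :
    ∃ h : L2I b, ∀ z, (z - l) * moment h 0 z = moment g 0 z := by
  set μ : Measure ℝ := volume.restrict (Ioo (-b) b) with hμ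
  set f : ℝ → ℂ := fun t => conj (g t) * expMono 0 l t with hf
  have hfi : Integrable f μ := integrable_conj_mul g (continuous_expMono 0 l)
  set T : Set (ℝ × ℝ) := {p | p.2 < p.1} with hT
  have hTm : MeasurableSet T := measurableSet_lt measurable_snd measurable_fst
  set φ : ℝ → ℂ := fun x => ∫ t, T.indicator (fun p => f p.2) (x, t) ∂μ with hφ
  have hφm : AEStronglyMeasurable φ μ := by
    refine AEStronglyMeasurable.integral_prod_right' (μ := μ) (ν := μ) ?_
    exact (hfi.aestronglyMeasurable.comp_snd).indicator hTm
  have hφb : ∀ x, ‖φ x‖ ≤ ∫ t, ‖f t‖ ∂μ := by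
    intro x
    refine norm_integral_le_of_norm_le hfi.norm (Filter.Eventually.of_forall fun t => ?_)
    exact norm_indicator_le_norm_self (fun p : ℝ × ℝ => f p.2) (x, t)
  have hψ : MemLp (fun x => conj (-Complex.I * (φ x * Complex.exp (-(Complex.I * l * x))))) 2 μ := by
    have h1 : MemLp φ 2 μ := MemLp.of_bound hφm _ (Filter.Eventually.of_forall hφb)
    have h2 : Continuous fun x : ℝ => Complex.exp (-(Complex.I * l * x)) := by fun_prop
    obtain ⟨C, hC⟩ :=
      (isCompact_Icc (a := -b) (b := b)).exists_bound_of_continuousOn h2.continuousOn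
    have h3 : MemLp (fun x => φ x * Complex.exp (-(Complex.I * l * x))) 2 μ := by
      refine MemLp.of_bound (hφm.mul h2.aestronglyMeasurable) ((∫ t, ‖f t‖ ∂μ) * C) ?_
      filter_upwards [ae_restrict_mem measurableSet_Ioo] with x hx
      rw [norm_mul]
      exact mul_le_mul (hφb x) (hC x ⟨hx.1.le, hx.2.le⟩) (norm_nonneg _)
        (integral_nonneg fun _ => norm_nonneg _)
    exact (h3.const_mul (-Complex.I)).star
  refine ⟨hψ.toLp _, fun z => ?_⟩
  set u : ℝ → ℂ := fun x => Complex.exp (Complex.I * (z - l) * x) with hu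
  set u' : ℝ → ℂ := fun x => Complex.I * (z - l) * u x with hu'
  have hud : ∀ x, HasDerivAt u (u' x) x := by
    intro x
    have := ((Complex.ofRealCLM.hasDerivAt (x := x)).const_mul (Complex.I * (z - l))).cexp
    refine this.congr_deriv ?_
    simp [hu', hu, mul_comm]
  have hu'c : Continuous u' := by fun_prop
  have hu'i : Integrable u' μ := (memLp_of_continuous b 1 hu'c).integrable le_rfl
  have e1 : (z - l) * moment (hψ.toLp _) 0 z = - ∫ x, φ x * u' x ∂μ := by
    rw [moment, ← integral_const_mul, ← integral_neg]
    refine integral_congr_ae ?_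
    filter_upwards [hψ.coeFn_toLp] with x hx
    rw [hx, Complex.conj_conj]
    have : Complex.exp (-(Complex.I * l * x)) * expMono 0 z x = u x := by
      rw [expMono, pow_zero, one_mul, ← Complex.exp_add, hu]
      congr 1; ring
    simp only [hu']
    rw [← this]
    ring
  have e2 : ∫ x, φ x * u' x ∂μ = ∫ x, ∫ t, T.indicator (fun p => f p.2 * u' p.1) (x, t) ∂μ ∂μ := by
    refine integral_congr_ae (Filter.Eventually.of_forall fun x => ?_)
    simp only [hφ]
    rw [← integral_mul_const]
    refine integral_congr_ae (Filter.Eventually.of_forall fun t => ?_)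
    by_cases h : (x, t) ∈ T <;> simp [h]
  have hinteg : Integrable (Function.uncurry fun x t => T.indicator (fun p => f p.2 * u' p.1) (x, t))
      (μ.prod μ) := by
    have := (hu'i.mul_prod hfi).indicator hTm
    refine this.congr (Filter.Eventually.of_forall fun p => ?_)
    simp only [Function.uncurry, Prod.mk.eta]
    by_cases h : p ∈ T <;> simp [h, mul_comm]
  have e3 : ∀ t ∈ Ioo (-b) b,
      ∫ x, T.indicator (fun p => f p.2 * u' p.1) (x, t) ∂μ = f t * (u b - u t) := by
    intro t ht
    have : ∀ x, T.indicator (fun p => f p.2 * u' p.1) (x, t)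
        = (Ioi t).indicator (fun x => f t * u' x) x := by
      intro x
      by_cases h : t < x <;> simp [hT, h]
    simp only [this]
    rw [hμ, setIntegral_indicator measurableSet_Ioi]
    have hs : Ioo (-b) b ∩ Ioi t = Ioo t b := by
      ext x
      simp only [mem_inter_iff, mem_Ioo, mem_Ioi]
      constructor
      · rintro ⟨⟨_, h⟩, h'⟩; exact ⟨h', h⟩
      · rintro ⟨h, h'⟩; exact ⟨⟨ht.1.trans h, h'⟩, h⟩
    rw [hs, integral_const_mul, ← integral_Ioc_eq_integral_Ioo,
      ← intervalIntegral.integral_of_le ht.2.le,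
      intervalIntegral.integral_eq_sub_of_hasDerivAt (fun x _ => hud x)
        (hu'c.intervalIntegrable _ _)]
  rw [e1, e2, integral_integral_swap hinteg,
    setIntegral_congr_fun measurableSet_Ioo (fun t ht => e3 t ht)]
  have hfu : Integrable (fun t => f t * u t) μ := by
    have := integrable_conj_mul g (f := fun t => expMono 0 l t * u t)
      ((continuous_expMono 0 l).mul (by fun_prop))
    refine this.congr (Filter.Eventually.of_forall fun t => ?_)
    simp only [hf]; ring
  have hf0 : ∫ t, f t ∂μ = 0 := hl
  simp only [mul_sub]
  rw [integral_sub (hfi.mul_const _) hfu, integral_mul_const, hf0, zero_mul, zero_sub, neg_neg,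
    moment]
  refine integral_congr_ae (Filter.Eventually.of_forall fun t => ?_)
  simp only [hf, hu, expMono, pow_zero, one_mul, mul_assoc]
  rw [← Complex.exp_add]
  congr 2; ring

/-! ### Norm comparison on a horizontal line -/

lemma norm_sq_eq_integral {b : ℝ} (g : L2I b) :
    ‖g‖ ^ 2 = ∫ x in Ioo (-b) b, ‖g x‖ ^ 2 := by
  have h : ‖g‖ ^ 2 = RCLike.re (inner ℂ g g) := (inner_self_eq_norm_sq (𝕜 := ℂ) g).symm
  rw [h, L2.inner_def, ← integral_re (L2.integrable_inner g g)]
  refine integral_congr_ae (Filter.Eventually.of_forall fun x => ?_)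
  exact inner_self_eq_norm_sq (𝕜 := ℂ) (g x)

/-- Parseval's identity on the line `Im z = Y`: the values of the transform of `g` at the points
`-πn/b + iY` are, up to a factor, the Fourier coefficients of `conj (g x) e^{-Yx}` on `(−b, b)`. -/
lemma hasSum_sq_moment {b : ℝ} (hb : 0 < b) (Y : ℝ) (g : L2I b) :
    HasSum (fun n : ℤ => ‖moment g 0 (-(Real.pi * n / b) + Complex.I * Y)‖ ^ 2)
      (2 * b * ∫ x in Ioo (-b) b, (Real.exp (-Y * x) * ‖g x‖) ^ 2) := by
  have hab : -b < b := by linarith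
  set f : ℝ → ℂ := fun x => conj (g x) * Complex.exp (-Y * x) with hf
  have hfL : MemLp f 2 (volume.restrict (Ioc (-b) b)) := by
    rw [← restrict_Ioo_eq_restrict_Ioc]
    have h2 : Continuous fun x : ℝ => Complex.exp (-Y * x) := by fun_prop
    exact (memLp_of_continuous b ⊤ h2).mul (memLp_conj g)
  have h := (hasSum_sq_fourierCoeffOn hab hfL).mul_left ((2 * b) ^ 2)
  have hco : ∀ n : ℤ, (2 * b) ^ 2 * ‖fourierCoeffOn hab f n‖ ^ 2 =
      ‖moment g 0 (-(Real.pi * n / b) + Complex.I * Y)‖ ^ 2 := by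
    intro n
    rw [fourierCoeffOn_eq_integral, norm_smul, mul_pow ‖_‖, ← mul_assoc]
    have h1 : (2 * b) ^ 2 * ‖1 / (b - -b)‖ ^ 2 = 1 := by
      rw [Real.norm_eq_abs, sq_abs]; field_simp; ring
    rw [h1, one_mul, intervalIntegral.integral_of_le hab.le, integral_Ioc_eq_integral_Ioo, moment]
    congr 2
    refine integral_congr_ae (Filter.Eventually.of_forall fun x => ?_)
    simp only [hf, fourier_coe_apply, smul_eq_mul, expMono, pow_zero, one_mul]
    rw [mul_left_comm, ← Complex.exp_add]
    congr 2
    push_cast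
    have hbc : (b : ℂ) ≠ 0 := by exact_mod_cast hb.ne'
    have hI : Complex.I * (Complex.I * Y) = -Y := by
      rw [← mul_assoc, Complex.I_mul_I]; ring
    rw [mul_add, hI]
    field_simp
    ring
  simp only [hco] at h
  suffices hsum : 2 * b * (∫ x in Ioo (-b) b, (Real.exp (-Y * x) * ‖g x‖) ^ 2) =
      (2 * b) ^ 2 * (b - -b)⁻¹ • ∫ x in -b..b, ‖f x‖ ^ 2 by rw [hsum]; exact h
  rw [intervalIntegral.integral_of_le hab.le, integral_Ioc_eq_integral_Ioo, smul_eq_mul,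
    ← mul_assoc]
  congr 1
  · field_simp; ring
  · refine integral_congr_ae (Filter.Eventually.of_forall fun x => ?_)
    simp only [hf, norm_mul, RCLike.norm_conj, Complex.norm_exp]
    rw [mul_comm ‖g x‖]
    simp

/-- A pointwise comparison of transforms on the line `Im z = Y` gives a comparison of `L²` norms. -/
lemma norm_le_of_moment_le {b : ℝ} (hb : 0 < b) (Y : ℝ) (g h : L2I b) (ε : ℝ) (hε : 0 ≤ ε)
    (H : ∀ ζ : ℂ, ζ.im = Y → ‖moment h 0 ζ‖ ≤ ε * ‖moment g 0 ζ‖) :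
    ‖h‖ ≤ Real.exp (2 * |Y| * b) * ε * ‖g‖ := by
  have hs := hasSum_sq_moment hb Y
  have key : (2 * b * ∫ x in Ioo (-b) b, (Real.exp (-Y * x) * ‖h x‖) ^ 2) ≤
      ε ^ 2 * (2 * b * ∫ x in Ioo (-b) b, (Real.exp (-Y * x) * ‖g x‖) ^ 2) := by
    refine hasSum_le (fun n => ?_) (hs h) ((hs g).mul_left (ε ^ 2))
    rw [← mul_pow]
    refine pow_le_pow_left₀ (norm_nonneg _) (H _ ?_) 2
    have : (-(Real.pi * n / b) + Complex.I * Y : ℂ)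
      = ((-(Real.pi * n / b) : ℝ) : ℂ) + (Y : ℂ) * Complex.I := by push_cast; ring
    rw [this]
    simp
  have hinteg : ∀ g : L2I b, Integrable (fun x => ‖g x‖ ^ 2) (volume.restrict (Ioo (-b) b)) :=
    fun g => (Lp.memLp g).integrable_norm_pow two_ne_zero
  have hinte : ∀ g : L2I b, Integrable (fun x => (Real.exp (-Y * x) * ‖g x‖) ^ 2)
      (volume.restrict (Ioo (-b) b)) := by
    intro g
    have h2 : Continuous fun x : ℝ => Complex.exp (-Y * x) := by fun_prop
    have := ((Lp.memLp g).mul (p := ⊤) (q := 2) (r := 2)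
      (memLp_of_continuous b ⊤ h2)).integrable_norm_pow two_ne_zero
    refine this.congr (Filter.Eventually.of_forall fun x => ?_)
    simp [Complex.norm_exp]
  have hexp : ∀ x ∈ Ioo (-b) b, |(-Y * x)| ≤ |Y| * b := by
    intro x hx
    rw [abs_mul, abs_neg]
    gcongr
    exact abs_le.2 ⟨hx.1.le, hx.2.le⟩
  set E := Real.exp (|Y| * b) with hE
  have hEpos : 0 < E := Real.exp_pos _
  have lower : ‖h‖ ^ 2 ≤ E ^ 2 * ∫ x in Ioo (-b) b, (Real.exp (-Y * x) * ‖h x‖) ^ 2 := by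
    rw [norm_sq_eq_integral, ← integral_const_mul]
    refine integral_mono_ae (hinteg h) ((hinte h).const_mul _) ?_
    filter_upwards [ae_restrict_mem measurableSet_Ioo] with x hx
    rw [← mul_pow, ← mul_assoc, hE, ← Real.exp_add]
    refine pow_le_pow_left₀ (norm_nonneg _) ?_ 2
    refine le_mul_of_one_le_left (norm_nonneg _) (Real.one_le_exp ?_)
    have := neg_abs_le (-Y * x)
    linarith [hexp x hx]
  have upper : ∫ x in Ioo (-b) b, (Real.exp (-Y * x) * ‖g x‖) ^ 2 ≤ E ^ 2 * ‖g‖ ^ 2 := by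
    rw [norm_sq_eq_integral, ← integral_const_mul]
    refine integral_mono_ae (hinte g) ((hinteg g).const_mul _) ?_
    filter_upwards [ae_restrict_mem measurableSet_Ioo] with x hx
    rw [← mul_pow]
    have : Real.exp (-Y * x) ≤ E := Real.exp_le_exp.2 ((le_abs_self _).trans (hexp x hx))
    gcongr
  have hEE : Real.exp (2 * |Y| * b) = E * E := by rw [hE, ← Real.exp_add]; congr 1; ring
  refine (pow_le_pow_iff_left₀ (norm_nonneg _) (by positivity) two_ne_zero).1 ?_
  have k2 : (∫ x in Ioo (-b) b, (Real.exp (-Y * x) * ‖h x‖) ^ 2) ≤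
      ε ^ 2 * ∫ x in Ioo (-b) b, (Real.exp (-Y * x) * ‖g x‖) ^ 2 := by
    have : 0 < 2 * b := by linarith
    refine le_of_mul_le_mul_left ?_ this
    linarith
  calc ‖h‖ ^ 2 ≤ E ^ 2 * (ε ^ 2 * (E ^ 2 * ‖g‖ ^ 2)) := by
        refine lower.trans ?_
        gcongr
        refine k2.trans ?_
        gcongr
    _ = _ := by rw [hEE]; ring

/-! ### Moving zeros -/

lemma analyticOrderAt_sub_mul {E : ℂ → ℂ} (hE : Differentiable ℂ E) (a w : ℂ) :
    analyticOrderAt (fun z => (z - a) * E z) w = (if a = w then 1 else 0) + analyticOrderAt E w := by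
  have h := analyticOrderAt_mul (f := (· - a)) (g := E) (z₀ := w) (by fun_prop) (hE.analyticAt w)
  have h' : (fun z => (z - a) * E z) = (· - a) * E := rfl
  rw [h', h]
  split_ifs with haw
  · subst haw; rw [analyticOrderAt_id_sub_const_self]
  · rw [analyticOrderAt_id_sub_const_of_ne (Ne.symm haw)]

lemma card_filter_insert {l : ℤ → ℂ} {A : Finset ℤ} {a : ℤ} (ha : a ∉ A) (w : ℂ) :
    (((insert a A).filter (fun k => l k = w)).card : ℕ∞) =
      (if l a = w then 1 else 0) + ((A.filter (fun k => l k = w)).card : ℕ∞) := by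
  rw [Finset.filter_insert]
  split_ifs with h
  · rw [Finset.card_insert_of_notMem (by simp [ha])]
    push_cast; ring
  · simp

lemma card_le_order_prod (l : ℤ → ℂ) (A : Finset ℤ) {E : ℂ → ℂ} (hE : Differentiable ℂ E) (w : ℂ) :
    ((A.filter (fun k => l k = w)).card : ℕ∞) ≤
      analyticOrderAt (fun z => (∏ k ∈ A, (z - l k)) * E z) w := by
  classical
  induction A using Finset.induction_on with
  | empty => simp
  | insert a A ha ih =>
    simp only [Finset.prod_insert ha, mul_assoc]
    rw [analyticOrderAt_sub_mul (E := fun z => (∏ k ∈ A, (z - l k)) * E z) (by fun_prop),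
      card_filter_insert ha]
    gcongr

lemma exists_factor (l : ℤ → ℂ) (A : Finset ℤ) {f : ℂ → ℂ} (hf : Differentiable ℂ f)
    (H : ∀ w, ((A.filter (fun k => l k = w)).card : ℕ∞) ≤ analyticOrderAt f w) :
    ∃ E : ℂ → ℂ, Differentiable ℂ E ∧ ∀ z, f z = (∏ k ∈ A, (z - l k)) * E z := by
  classical
  induction A using Finset.induction_on generalizing f with
  | empty => exact ⟨f, hf, by simp⟩
  | insert a A ha ih =>
    have hfa : f (l a) = 0 := by
      apply apply_eq_zero_of_analyticOrderAt_ne_zero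
      have := H (l a)
      rw [card_filter_insert ha, if_pos rfl] at this
      intro h0
      rw [h0] at this
      simp at this
    have hd : Differentiable ℂ (dslope f (l a)) := by
      rw [← differentiableOn_univ] at hf ⊢
      exact (Complex.differentiableOn_dslope Filter.univ_mem).2 hf
    have hfd : f = fun z => (z - l a) * dslope f (l a) z := by
      funext z
      have := sub_smul_dslope f (l a) z
      rw [smul_eq_mul, hfa, sub_zero] at this
      exact this.symm
    obtain ⟨E, hE, hE'⟩ := ih hd (fun w => by
      have := H w
      rw [card_filter_insert ha] at this
      rw [hfd, analyticOrderAt_sub_mul hd] at this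
      refine (ENat.add_le_add_iff_left ?_).1 this
      split_ifs <;> simp)
    refine ⟨E, hE, fun z => ?_⟩
    rw [Finset.prod_insert ha, mul_assoc, ← hE' z]
    exact congrFun hfd z

/-- Finitely many zeros of a transform may be moved: the replacement of each factor `z - l k` by
`z - m k` stays inside the class of transforms, since
`(z - m k) / (z - l k) = 1 + (l k - m k) / (z - l k)`. -/
lemma exists_moment_swap {b : ℝ} (l m : ℤ → ℂ) (A : Finset ℤ) {E : ℂ → ℂ} (hE : Continuous E)
    (H : ∃ g : L2I b, ∀ z, moment g 0 z = (∏ k ∈ A, (z - l k)) * E z) :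
    ∃ g : L2I b, ∀ z, moment g 0 z = (∏ k ∈ A, (z - m k)) * E z := by
  classical
  induction A using Finset.induction_on generalizing E with
  | empty => simpa using H
  | insert a A ha ih =>
    obtain ⟨g, hg⟩ := H
    simp only [Finset.prod_insert ha] at hg ⊢
    obtain ⟨h, hh⟩ := exists_moment_div g (l a) (by rw [hg]; simp)
    have hh' : (fun z => moment h 0 z) = fun z => (∏ k ∈ A, (z - l k)) * E z := by
      -- the two continuous functions agree off the point `l a`
      refine Continuous.ext_on (dense_compl_singleton (l a))
        (differentiable_moment h 0).continuous (by fun_prop) fun z hz => ?_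
      have hz' : z - l a ≠ 0 := sub_ne_zero.2 hz
      refine mul_left_cancel₀ hz' ?_
      rw [hh, hg, mul_assoc]
    obtain ⟨g', hg'⟩ := ih (E := fun z => (z - m a) * E z) (by fun_prop)
      ⟨g + (conj (l a - m a)) • h, fun z => by
        rw [moment_add, moment_smul, Complex.conj_conj, hg, congrFun hh' z]
        ring⟩
    exact ⟨g', fun z => by rw [hg']; ring⟩

/-- The transform of `g` vanishes at the points `l k`, multiplicities included: at each `w` its
order is at least the number of indices `k` with `l k = w`. -/
def VanishesAt {b : ℝ} (l : ℤ → ℂ) (g : L2I b) : Prop :=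
  ∀ (A : Finset ℤ) (w : ℂ), ∀ j < (A.filter (fun k => l k = w)).card, moment g j w = 0

/-- The points `l k` stay off the line `Im ζ = Y` and the sums `∑ 1 / |ζ - l k|²` are bounded by `C`
for `ζ` on that line. -/
def LineBound (l : ℤ → ℂ) (Y C : ℝ) : Prop :=
  ∀ ζ : ℂ, ζ.im = Y → (∀ k, ζ ≠ l k) ∧ ∀ A : Finset ℤ, ∑ k ∈ A, (‖ζ - l k‖⁻¹) ^ 2 ≤ C

lemma LineBound.prod_le {l : ℤ → ℂ} {Y C : ℝ} (hl : LineBound l Y C) (d : ℤ → ℂ) {ζ : ℂ}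
    (hζ : ζ.im = Y) (A : Finset ℤ) :
    ‖∏ k ∈ A, (1 + d k / (ζ - l k)) - 1‖ ≤
      Real.exp (√(∑ k ∈ A, ‖d k‖ ^ 2) * √C) - 1 := by
  refine (Finset.norm_prod_one_add_sub_one_le A _).trans ?_
  gcongr
  calc ∑ k ∈ A, ‖d k / (ζ - l k)‖ = ∑ k ∈ A, ‖d k‖ * ‖ζ - l k‖⁻¹ := by
        simp only [div_eq_mul_inv, norm_mul, norm_inv]
    _ ≤ √(∑ k ∈ A, ‖d k‖ ^ 2) * √(∑ k ∈ A, (‖ζ - l k‖⁻¹) ^ 2) :=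
        Real.sum_mul_le_sqrt_mul_sqrt A _ _
    _ ≤ _ := by
        gcongr
        exact (hl ζ hζ).2 A

lemma prod_sub_eq {l : ℤ → ℂ} (m : ℤ → ℂ) {ζ : ℂ} (h : ∀ k, ζ ≠ l k) (A : Finset ℤ) :
    ∏ k ∈ A, (ζ - m k) = (∏ k ∈ A, (1 + (l k - m k) / (ζ - l k))) * ∏ k ∈ A, (ζ - l k) := by
  rw [← Finset.prod_mul_distrib]
  refine Finset.prod_congr rfl fun k _ => ?_
  have : ζ - l k ≠ 0 := sub_ne_zero.2 (h k)
  field_simp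
  ring

/-- Moving all zeros by an `ℓ²` amount keeps the transform nonzero. The functions `G A` whose
transforms have the zeros indexed by the finite set `A` moved form a Cauchy net in `L²`, because on a
horizontal line the partial products converge uniformly. The limit is nonzero because the reciprocal
partial products are bounded there. -/
theorem exists_vanishesAt_of_perturb {b : ℝ} (hb : 0 < b) (l m : ℤ → ℂ)
    (hd : Summable fun k => ‖l k - m k‖ ^ 2) {Y C : ℝ} (hl : LineBound l Y C)
    (hm : LineBound m Y C) (g : L2I b) (hg0 : g ≠ 0) (hg : VanishesAt l g) :
    ∃ h : L2I b, h ≠ 0 ∧ VanishesAt m h := by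
  classical
  have hfac : ∀ A : Finset ℤ, ∃ E : ℂ → ℂ, Differentiable ℂ E ∧
      ∀ z, moment g 0 z = (∏ k ∈ A, (z - l k)) * E z := fun A =>
    exists_factor l A (differentiable_moment g 0) fun w =>
      (le_order_iff_moment g _ w).2 (hg A w)
  choose E hE hgE using hfac
  have hsw : ∀ A : Finset ℤ, ∃ h : L2I b, ∀ z, moment h 0 z = (∏ k ∈ A, (z - m k)) * E A z :=
    fun A => exists_moment_swap l m A (hE A).continuous ⟨g, hgE A⟩
  choose G hG using hsw
  have hGz : ∀ A ζ, ζ.im = Y → moment (G A) 0 ζ =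
      (∏ k ∈ A, (1 + (l k - m k) / (ζ - l k))) * moment g 0 ζ := by
    intro A ζ hζ
    rw [hG, hgE A, prod_sub_eq m (hl ζ hζ).1, mul_assoc]
  have hgz : ∀ A ζ, ζ.im = Y → moment g 0 ζ =
      (∏ k ∈ A, (1 + (m k - l k) / (ζ - m k))) * moment (G A) 0 ζ := by
    intro A ζ hζ
    rw [hG, hgE A, prod_sub_eq l (hm ζ hζ).1, mul_assoc]
  set D := ∑' k, ‖l k - m k‖ ^ 2 with hD
  set M := Real.exp (√D * √C) with hM
  set K := Real.exp (2 * |Y| * b) with hK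
  have hsumD : ∀ A : Finset ℤ, ∑ k ∈ A, ‖l k - m k‖ ^ 2 ≤ D :=
    fun A => hd.sum_le_tsum A fun _ _ => by positivity
  have hMbound : ∀ {p : ℂ} {A : Finset ℤ},
      ‖p - 1‖ ≤ Real.exp (√(∑ k ∈ A, ‖l k - m k‖ ^ 2) * √C) - 1 → ‖p‖ ≤ M := by
    intro p A hp
    have h1 : ‖p‖ ≤ ‖p - 1‖ + 1 := by simpa using norm_add_le (p - 1) 1
    have h2 : Real.exp (√(∑ k ∈ A, ‖l k - m k‖ ^ 2) * √C) ≤ M := by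
      rw [hM]
      gcongr
      exact hsumD A
    linarith
  have hlower : ∀ A, ‖g‖ ≤ K * M * ‖G A‖ := by
    intro A
    refine norm_le_of_moment_le hb Y (G A) g M (Real.exp_pos _).le fun ζ hζ => ?_
    rw [hgz A ζ hζ, norm_mul]
    gcongr
    refine hMbound (A := A) ?_
    simpa only [norm_sub_rev (m _) (l _)] using hm.prod_le (fun k => m k - l k) hζ A
  have hcauchy : CauchySeq G := by
    rw [Metric.cauchySeq_iff']
    intro ε hε
    -- a threshold `δ` for the tail sums that makes the final estimate smaller than `ε`
    have hcont : Filter.Tendsto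
        (fun t : ℝ => K * (M * (Real.exp (√t * √C) - 1)) * ‖g‖) (nhds 0) (nhds 0) := by
      have : Continuous fun t : ℝ => K * (M * (Real.exp (√t * √C) - 1)) * ‖g‖ := by fun_prop
      simpa using this.tendsto 0
    obtain ⟨δ, hδ, hδ'⟩ := Metric.tendsto_nhds_nhds.1 hcont ε hε
    obtain ⟨s, hs⟩ := summable_iff_vanishing_norm.1 hd δ hδ
    refine ⟨s, fun B hB => ?_⟩
    have htail := hs (B \ s) Finset.sdiff_disjoint
    have hfin := hδ' (by simpa using htail : dist (∑ k ∈ B \ s, ‖l k - m k‖ ^ 2) 0 < δ)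
    rw [dist_zero_right] at hfin
    rw [dist_eq_norm]
    refine lt_of_le_of_lt ?_ ((le_abs_self _).trans_lt hfin)
    refine norm_le_of_moment_le hb Y g _ _ ?_ fun ζ hζ => ?_
    · have : 1 ≤ Real.exp (√(∑ k ∈ B \ s, ‖l k - m k‖ ^ 2) * √C) :=
        Real.one_le_exp (by positivity)
      have hM0 : 0 ≤ M := (Real.exp_pos _).le
      exact mul_nonneg hM0 (by linarith)
    · rw [moment_sub, hGz B ζ hζ, hGz s ζ hζ, ← Finset.prod_sdiff hB]
      have h1 := hl.prod_le (fun k => l k - m k) hζ s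
      have h2 := hl.prod_le (fun k => l k - m k) hζ (B \ s)
      have h3 := hMbound h1
      rw [← sub_mul, norm_mul, ← sub_one_mul, norm_mul, mul_comm ‖_ - 1‖]
      gcongr
  obtain ⟨h, hh⟩ := cauchySeq_tendsto_of_complete hcauchy
  refine ⟨h, ?_, fun A w j hj => ?_⟩
  · rintro rfl
    have h1 : ‖g‖ ≤ K * M * ‖(0 : L2I b)‖ :=
      ge_of_tendsto' ((hh.norm).const_mul (K * M)) hlower
    rw [norm_zero, mul_zero] at h1
    exact hg0 (norm_le_zero_iff.1 h1)
  · have h1 : Filter.Tendsto (fun B => moment (G B) j w) Filter.atTop (nhds (moment h j w)) :=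
      ((continuous_moment j w).tendsto h).comp hh
    refine tendsto_nhds_unique h1 (tendsto_const_nhds.congr' ?_)
    filter_upwards [Filter.eventually_ge_atTop A] with B hB
    refine ((le_order_iff_moment (G B) (B.filter (fun k => m k = w)).card w).1 ?_ j ?_).symm
    · rw [funext (hG B)]
      exact card_le_order_prod m B (hE B) w
    · exact hj.trans_le (Finset.card_le_card (Finset.filter_subset_filter _ hB))

/-! ### Completeness in terms of zeros of transforms -/

/-- In a finite fibre of `l`, every `j` below its size is the number of predecessors,
within the fibre, of one of its elements. -/
lemma exists_ncard_eq {l : ℤ → ℂ} {w : ℂ} (hfin : {k | l k = w}.Finite) (A : Finset ℤ) {j : ℕ}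
    (hj : j < (A.filter (fun k => l k = w)).card) :
    ∃ k, l k = w ∧ {i : ℤ | i < k ∧ l i = l k}.ncard = j := by
  classical
  set S := hfin.toFinset with hS
  have hmem : ∀ k, k ∈ S ↔ l k = w := fun k => by simp [hS]
  have hjS : j < S.card :=
    hj.trans_le (Finset.card_le_card fun k hk => (hmem k).2 (Finset.mem_filter.1 hk).2)
  let r : ℤ → ℕ := fun k => (S.filter (· < k)).card
  have hmono : ∀ k ∈ S, ∀ k' ∈ S, k < k' → r k < r k' := by
    intro k hk k' _ hkk'
    refine Finset.card_lt_card ⟨fun i hi => ?_, fun h => ?_⟩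
    · rw [Finset.mem_filter] at hi ⊢
      exact ⟨hi.1, hi.2.trans hkk'⟩
    · have := h (Finset.mem_filter.2 ⟨hk, hkk'⟩)
      exact lt_irrefl _ (Finset.mem_filter.1 this).2
  have hinj : Set.InjOn r S := by
    intro k hk k' hk' h
    rcases lt_trichotomy k k' with h1 | h1 | h1
    · exact absurd h (hmono k hk k' hk' h1).ne
    · exact h1
    · exact absurd h (hmono k' hk' k hk h1).ne'
  have himg : S.image r = Finset.range S.card := by
    refine Finset.eq_of_subset_of_card_le (fun i hi => ?_) ?_
    · obtain ⟨k, hk, rfl⟩ := Finset.mem_image.1 hi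
      refine Finset.mem_range.2 (Finset.card_lt_card ⟨Finset.filter_subset _ _, fun h => ?_⟩)
      exact lt_irrefl _ (Finset.mem_filter.1 (h hk)).2
    · rw [Finset.card_image_of_injOn hinj, Finset.card_range]
  obtain ⟨k, hk, hkj⟩ := Finset.mem_image.1 (himg ▸ Finset.mem_range.2 hjS)
  refine ⟨k, (hmem k).1 hk, ?_⟩
  rw [← hkj]
  simp only [r]
  rw [← Set.ncard_coe_finset]
  congr 1
  ext i
  simp [hmem, (hmem k).1 hk, and_comm]

/-- Completeness in dual form: the only function whose transform vanishes at all `l k`, with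
multiplicities, is zero. -/
lemma systemComplete_iff {b : ℝ} {l : ℤ → ℂ} (hfin : ∀ w, {k | l k = w}.Finite)
    {e : ℤ → ℝ → ℂ}
    (he : ∀ k x, e k x = expMono ({j : ℤ | j < k ∧ l j = l k}.ncard) (l k) x) :
    SystemComplete b e ↔ ∀ g : L2I b, VanishesAt l g → g = 0 := by
  classical
  have he' : ∀ k, e k = expMono ({j : ℤ | j < k ∧ l j = l k}.ncard) (l k) := fun k => funext (he k)
  have horth : ∀ g : L2I b,
      g ∈ (Submodule.span ℂ {F : Lp ℂ 2 (volume.restrict (Ioo (-b) b)) |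
        ∃ k : ℤ, (F : ℝ → ℂ) =ᵐ[volume.restrict (Ioo (-b) b)] e k})ᗮ ↔
      ∀ k, moment g ({j : ℤ | j < k ∧ l j = l k}.ncard) (l k) = 0 := by
    intro g
    constructor
    · intro hg k
      rw [moment_eq_inner]
      refine (Submodule.mem_orthogonal' _ _).1 hg _ (Submodule.subset_span ⟨k, ?_⟩)
      rw [he' k]
      exact MemLp.coeFn_toLp _
    · intro hg
      rw [Submodule.mem_orthogonal']
      intro F hF
      induction hF using Submodule.span_induction with
      | mem F hF =>
        obtain ⟨k, hk⟩ := hF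
        rw [← hg k, moment_eq_inner]
        congr 1
        refine Lp.ext (hk.trans ?_)
        rw [he' k]
        exact (MemLp.coeFn_toLp _).symm
      | zero => exact inner_zero_right _
      | add x y _ _ hx hy => rw [inner_add_right, hx, hy, add_zero]
      | smul c x _ hx => rw [inner_smul_right, hx, mul_zero]
  have hvan : ∀ g : L2I b, VanishesAt l g ↔
      ∀ k, moment g ({j : ℤ | j < k ∧ l j = l k}.ncard) (l k) = 0 := by
    intro g
    constructor
    · intro hg k
      have hf : {j : ℤ | j < k ∧ l j = l k}.Finite := (hfin (l k)).subset fun j hj => hj.2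
      refine hg (insert k hf.toFinset) (l k) _ ?_
      have hfilter : (insert k hf.toFinset).filter (fun j => l j = l k)
          = insert k hf.toFinset := by
        refine Finset.filter_true_of_mem fun j hj => ?_
        rcases Finset.mem_insert.1 hj with rfl | hj
        · rfl
        · exact (hf.mem_toFinset.1 hj).2
      rw [hfilter, Finset.card_insert_of_notMem (by simp), Set.ncard_eq_toFinset_card _ hf]
      exact Nat.lt_succ_self _
    · intro hg A w j hj
      obtain ⟨k, rfl, rfl⟩ := exists_ncard_eq (hfin w) A hj
      exact hg k
  rw [SystemComplete, Submodule.topologicalClosure_eq_top_iff, Submodule.eq_bot_iff]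
  simp only [horth, hvan]

/-! ### Integer and perturbed exponents on a horizontal line -/

/-- Distinct integers satisfy a line bound uniform in the line: with `p = ⌊Re ζ⌋` one has
`|ζ - n k|² ≥ ((p - n k)² + 1) / 3` as soon as `Im ζ ≥ 1`. -/
lemma exists_lineBound {n : ℤ → ℤ} (hn : Function.Injective n) :
    ∃ C : ℝ, 0 ≤ C ∧ ∀ Y : ℝ, 1 ≤ Y → LineBound (fun k => (n k : ℂ)) Y C := by
  classical
  have hsum : Summable fun j : ℤ => 3 * ((j : ℝ) ^ 2 + 1)⁻¹ := by
    refine Summable.mul_left 3 ?_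
    have h2 : Summable fun j : ℤ => 1 / (j : ℝ) ^ 2 :=
      Real.summable_one_div_int_pow.2 one_lt_two
    refine Summable.of_norm_bounded_eventually h2 ?_
    filter_upwards [(Set.finite_singleton (0 : ℤ)).compl_mem_cofinite] with j hj
    have hj0 : (j : ℝ) ≠ 0 := by exact_mod_cast hj
    rw [Real.norm_of_nonneg (by positivity), one_div]
    gcongr
    linarith
  refine ⟨∑' j : ℤ, 3 * ((j : ℝ) ^ 2 + 1)⁻¹, tsum_nonneg fun j => by positivity,
    fun Y hY ζ hζ => ⟨fun k h => ?_, fun A => ?_⟩⟩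
  · rw [h, Complex.intCast_im] at hζ
    linarith
  · set p := ⌊ζ.re⌋ with hp
    have hinj : Set.InjOn (fun k => p - n k) (A : Set ℤ) := fun i _ j _ h => hn (by simpa using h)
    calc ∑ k ∈ A, (‖ζ - n k‖⁻¹) ^ 2
        ≤ ∑ k ∈ A, 3 * (((p - n k : ℤ) : ℝ) ^ 2 + 1)⁻¹ := by
          refine Finset.sum_le_sum fun k _ => ?_
          have h1 : ‖ζ - n k‖ ^ 2 = (ζ.re - n k) ^ 2 + Y ^ 2 := by
            rw [← Complex.normSq_eq_norm_sq, Complex.normSq_apply]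
            simp [hζ]; ring
          have h2 := Int.floor_le ζ.re
          have h3 := Int.lt_floor_add_one ζ.re
          rw [inv_pow, h1, ← div_eq_mul_inv, inv_eq_one_div,
            div_le_div_iff₀ (by positivity) (by positivity)]
          push_cast
          have h4 : (ζ.re - p) ^ 2 ≤ 1 := by
            rw [hp]; nlinarith
          nlinarith [sq_nonneg ((ζ.re - n k) + (ζ.re - p))]
      _ = ∑ j ∈ A.image (fun k => p - n k), 3 * ((j : ℝ) ^ 2 + 1)⁻¹ := by
          rw [Finset.sum_image hinj]
      _ ≤ _ := hsum.sum_le_tsum _ fun j _ => by positivity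

/-- with `z_k = n_k + κ_k`, `(κ_k) ∈ ℓ²`, equal values among the `z_k`
neighboring, and `e_{k+ν}(x) = x^ν e^{i z_k x}` (`ν` less than the multiplicity),
the system `{e_k}` is complete in `L²(−b, b)` iff `{e^{i n_k x}}` is. -/
theorem statement7 (b : ℝ) (hb : 0 < b)
    (n : ℤ → ℤ) (hn : StrictMono n)
    (κ : ℤ → ℂ) (hκ : Summable (fun k : ℤ => ‖κ k‖ ^ 2))
    (z : ℤ → ℂ) (hz : ∀ k : ℤ, z k = (n k : ℂ) + κ k)
    -- equal values among the `z_k` are neighboring: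
    (hnb : ∀ i j k : ℤ, i ≤ j → j ≤ k → z i = z k → z j = z i)
    (e : ℤ → ℝ → ℂ)
    (he : ∀ k : ℤ, ∀ x : ℝ,
      e k x = (x : ℂ) ^ ({j : ℤ | j < k ∧ z j = z k}.ncard)
        * Complex.exp (Complex.I * z k * (x : ℂ))) :
    SystemComplete b e ↔
      SystemComplete b (fun k x => Complex.exp (Complex.I * (n k : ℂ) * (x : ℂ))) := by
  classical
  have hninj : Function.Injective fun k => (n k : ℂ) := Int.cast_injective.comp hn.injective
  obtain ⟨R, hR0, hR⟩ : ∃ R : ℝ, 0 ≤ R ∧ ∀ k, ‖κ k‖ ≤ R :=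
    ⟨√(∑' k, ‖κ k‖ ^ 2), Real.sqrt_nonneg _, fun k =>
      Real.le_sqrt_of_sq_le (hκ.le_tsum k fun _ _ => by positivity)⟩
  have hzfin : ∀ w, {k | z k = w}.Finite := by
    intro w
    refine ((Set.finite_Icc (-⌈‖w‖ + R⌉) ⌈‖w‖ + R⌉).preimage hn.injective.injOn).subset ?_
    intro k hk
    have h1 : ‖(n k : ℂ)‖ ≤ ‖w‖ + R := by
      have : (n k : ℂ) = w - κ k := by rw [← (hk : z k = w), hz]; ring
      rw [this]
      exact (norm_sub_le _ _).trans (by gcongr; exact hR k)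
    rw [Complex.norm_intCast] at h1
    have h2 : |n k| ≤ ⌈‖w‖ + R⌉ := by
      have : ((|n k| : ℤ) : ℝ) ≤ ⌈‖w‖ + R⌉ := by
        push_cast
        exact h1.trans (Int.le_ceil _)
      exact_mod_cast this
    exact abs_le.1 h2
  have hnfin : ∀ w, {k | (n k : ℂ) = w}.Finite := fun w =>
    (Set.finite_singleton w).preimage hninj.injOn
  rw [systemComplete_iff hzfin (e := e) he, systemComplete_iff (l := fun k => (n k : ℂ)) hnfin
    (e := fun k x => Complex.exp (Complex.I * (n k : ℂ) * (x : ℂ))) (fun k x => by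
      have : {j : ℤ | j < k ∧ (n j : ℂ) = n k} = ∅ := by
        ext j
        simp only [mem_ofPred_eq, mem_empty_iff_false, iff_false]
        rintro ⟨h1, h2⟩
        exact h1.ne (hninj h2)
      rw [this, Set.ncard_empty, expMono, pow_zero, one_mul])]
  obtain ⟨C, hC0, hC⟩ := exists_lineBound hn.injective
  -- on the line `Im ζ = 1 + 2R` one has `|ζ - n k| ≥ 2 |κ k|`, hence `|ζ - z k| ≥ |ζ - n k| / 2`
  set Y := 1 + 2 * R with hY
  have hlb := hC Y (by linarith)
  have hnY : LineBound (fun k => (n k : ℂ)) Y (4 * C) := fun ζ hζ =>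
    ⟨(hlb ζ hζ).1, fun A => ((hlb ζ hζ).2 A).trans (by linarith)⟩
  have hzY : LineBound z Y (4 * C) := by
    intro ζ hζ
    have hhalf : ∀ k, 0 < ‖ζ - n k‖ ∧ ‖ζ - n k‖ / 2 ≤ ‖ζ - z k‖ := by
      intro k
      have h1 : Y ≤ ‖ζ - n k‖ := by
        have := Complex.abs_im_le_norm (ζ - n k)
        rw [Complex.sub_im, Complex.intCast_im, sub_zero, hζ] at this
        exact (le_abs_self _).trans this
      have h2 : ‖ζ - n k‖ - ‖κ k‖ ≤ ‖ζ - z k‖ := by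
        have := norm_sub_norm_le (ζ - n k) (κ k)
        rwa [sub_sub, ← hz] at this
      have h3 := hR k
      exact ⟨by linarith, by linarith⟩
    refine ⟨fun k h => ?_, fun A => ?_⟩
    · have := hhalf k
      rw [← h, sub_self, norm_zero] at this
      linarith [this.1, this.2]
    · calc ∑ k ∈ A, (‖ζ - z k‖⁻¹) ^ 2 ≤ ∑ k ∈ A, 4 * (‖ζ - n k‖⁻¹) ^ 2 := by
            refine Finset.sum_le_sum fun k _ => ?_
            obtain ⟨h1, h2⟩ := hhalf k
            calc (‖ζ - z k‖⁻¹) ^ 2 ≤ ((‖ζ - n k‖ / 2)⁻¹) ^ 2 := by gcongr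
              _ = _ := by field_simp; norm_num
        _ = 4 * ∑ k ∈ A, (‖ζ - n k‖⁻¹) ^ 2 := by rw [Finset.mul_sum]
        _ ≤ 4 * C := by
            gcongr
            exact (hlb ζ hζ).2 A
  have hd1 : Summable fun k => ‖z k - n k‖ ^ 2 := by simpa [hz] using hκ
  have hd2 : Summable fun k => ‖n k - z k‖ ^ 2 := by simpa only [norm_sub_rev] using hd1
  constructor
  · intro H g hg
    by_contra hg0
    obtain ⟨h, hh0, hh⟩ := exists_vanishesAt_of_perturb hb _ z hd2 hnY hzY g hg0 hg
    exact hh0 (H h hh)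
  · intro H g hg
    by_contra hg0
    obtain ⟨h, hh0, hh⟩ := exists_vanishesAt_of_perturb hb z _ hd1 hzY hnY g hg0 hg
    exact hh0 (H h hh)
end

section
/- Let b > 0, let (n_k)_{k∈ℤ} be an increasing sequence of integers, let (κ_k)_{k∈ℤ} ∈ ℓ² be complex, and set z_k = n_k + κ_k. Assume equal values among the z_k are neighboring, i.e. whenever z_k has multiplicity m_k in the sequence, z_k = z_{k+1} = … = z_{k+m_k−1}; let S = {k ∈ ℤ : z_k ≠ z_{k−1}} and define e_{k+ν}(x) = x^ν · exp(i z_k x) for k ∈ S and ν = 0, …, m_k − 1. Then the systems {e_k}_{k∈ℤ} and {exp(i n_k x)}_{k∈ℤ} are quadratically close in L²(−b, b): Σ_{k∈ℤ} ∫_{−b}^{b} |e_k(x) − exp(i n_k x)|² dx < ∞. -/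
/-!
Since `κ k → 0` along the cofinite filter, all but finitely many `k` satisfy `‖κ k‖ < 1/2`,
`‖κ (k - 1)‖ < 1/2` and `‖κ k‖ * b ≤ 1`. For such `k` the value `z k` differs from `z (k - 1)`,
because `n k - n (k - 1) ≥ 1`; as equal values are neighboring, no earlier index carries the value
`z k`, so `e k x = exp (i z_k x)`. Then
`‖e k x - exp (i n_k x)‖ = ‖exp (i κ_k x) - 1‖ ≤ 2 ‖κ k‖ b` on `(-b, b)`, and the `k`-th integral
is at most `(2 ‖κ k‖ b)² · 2b`, a multiple of the summable `‖κ k‖ ^ 2`.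
-/

open Filter Topology

open MeasureTheory Set

/-- with `z_k = n_k + κ_k`, `(κ_k) ∈ ℓ²`, equal values among the `z_k`
neighboring, and `e_{k+ν}(x) = x^ν e^{i z_k x}` (`ν` less than the multiplicity),
the systems `{e_k}` and `{e^{i n_k x}}` are quadratically close in `L²(−b, b)`:
`Σ_k ∫_{−b}^{b} |e_k(x) − e^{i n_k x}|² dx < ∞`. -/
theorem statement10 (b : ℝ) (hb : 0 < b)
    (n : ℤ → ℤ) (hn : StrictMono n)
    (κ : ℤ → ℂ) (hκ : Summable (fun k : ℤ => ‖κ k‖ ^ 2))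
    (z : ℤ → ℂ) (hz : ∀ k : ℤ, z k = (n k : ℂ) + κ k)
    -- equal values among the `z_k` are neighboring:
    (hnb : ∀ i j k : ℤ, i ≤ j → j ≤ k → z i = z k → z j = z i)
    (e : ℤ → ℝ → ℂ)
    (he : ∀ k : ℤ, ∀ x : ℝ,
      e k x = (x : ℂ) ^ ({j : ℤ | j < k ∧ z j = z k}.ncard)
        * Complex.exp (Complex.I * z k * (x : ℂ))) :
    Summable (fun k : ℤ =>
      ∫ x in Ioo (-b) b, ‖e k x - Complex.exp (Complex.I * (n k : ℂ) * (x : ℂ))‖ ^ 2) := by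
  have hlim : Tendsto (fun k => ‖κ k‖) cofinite (𝓝 0) := by
    have h := hκ.tendsto_cofinite_zero.sqrt
    simpa [Real.sqrt_sq] using h
  have hhalf : ∀ᶠ k in cofinite, ‖κ k‖ < 1 / 2 := hlim.eventually (gt_mem_nhds (by norm_num))
  have hhalf' : ∀ᶠ k in cofinite, ‖κ (k - 1)‖ < 1 / 2 :=
    (sub_left_injective (b := (1 : ℤ))).tendsto_cofinite.eventually hhalf
  have hsmall : ∀ᶠ k in cofinite, ‖κ k‖ < 1 / b := hlim.eventually (gt_mem_nhds (by positivity))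
  refine Summable.of_norm_bounded_eventually
    (g := fun k => ‖κ k‖ ^ 2 * ((2 * b) ^ 2 * (2 * b))) (hκ.mul_right _) ?_
  filter_upwards [hhalf, hhalf', hsmall] with k h1 h2 h3
  have hne : z (k - 1) ≠ z k := by
    intro h
    rw [hz, hz] at h
    have hlt : n (k - 1) < n k := hn (by omega)
    have heq : ((n k - n (k - 1) : ℤ) : ℂ) = κ (k - 1) - κ k := by
      push_cast
      linear_combination -h
    have hnorm := norm_sub_le (κ (k - 1)) (κ k)
    rw [← heq, Complex.norm_intCast] at hnorm
    have h1le : (1 : ℝ) ≤ |((n k - n (k - 1) : ℤ) : ℝ)| := by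
      refine le_trans ?_ (le_abs_self _)
      exact_mod_cast (by omega : (1 : ℤ) ≤ n k - n (k - 1))
    linarith
  have hempty : {j : ℤ | j < k ∧ z j = z k} = ∅ := by
    ext j
    simp only [mem_setOf_eq, mem_empty_iff_false, iff_false, not_and]
    intro hj hjk
    exact hne ((hnb j (k - 1) k (by omega) (by omega) hjk).trans hjk)
  have hκb : ‖κ k‖ * b ≤ 1 := by
    rw [lt_div_iff₀ hb] at h3
    exact h3.le
  have hpt : ∀ x ∈ Ioo (-b) b,
      ‖‖e k x - Complex.exp (Complex.I * (n k : ℂ) * (x : ℂ))‖ ^ 2‖ ≤ (2 * (‖κ k‖ * b)) ^ 2 := by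
    intro x hx
    have hxb : |x| ≤ b := (abs_lt.2 hx).le
    have hnx : ‖Complex.I * κ k * (x : ℂ)‖ ≤ ‖κ k‖ * b := by
      simp only [norm_mul, Complex.norm_I, one_mul, Complex.norm_real, Real.norm_eq_abs]
      gcongr
    have hfac : e k x - Complex.exp (Complex.I * (n k : ℂ) * (x : ℂ))
        = Complex.exp (Complex.I * (n k : ℂ) * (x : ℂ))
          * (Complex.exp (Complex.I * κ k * (x : ℂ)) - 1) := by
      rw [he, hempty, ncard_empty, pow_zero, one_mul, hz, mul_sub, mul_one, ← Complex.exp_add]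
      congr 2
      ring
    have hone : ‖Complex.exp (Complex.I * (n k : ℂ) * (x : ℂ))‖ = 1 := by
      rw [Complex.norm_exp]
      simp
    rw [norm_pow, norm_norm, hfac, norm_mul, hone, one_mul]
    have hexp := Complex.norm_exp_sub_one_le (hnx.trans hκb)
    gcongr
    linarith
  refine (norm_setIntegral_le_of_norm_le_const (by simp) hpt).trans (le_of_eq ?_)
  rw [Real.volume_real_Ioo_of_le (by linarith)]
  ring
end
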